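/- Let H ≥ 1 and let X^{(1)}, …, X^{(n)}, X^{(n+1)} be independent and identically distributed random vectors with values in ℝ^H on a probability space (Ω, P), and let A = (A_1, …, A_H) be a random vector with strictly positive entries that is independent of the family (X^{(1)}, …, X^{(n+1)}). Let δ ∈ (0,1) and set p := ⌈(n+1)(1−δ)⌉; assume p ≤ n. Define the random scores S^{(i)} := max_{1≤h≤H} A_h X^{(i)}_h and let Q be the p-th smallest value among S^{(1)}, …, S^{(n)}. Then P( for all h ∈ {1,…,H}: X^{(n+1)}_h ≤ Q/A_h ) ≥ 1 − δ. -/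

import Mathlib

/-!
The pairs `(A, X i)` are exchangeable: `X` is i.i.d. and `A` is independent of it. Applying one
measurable score function to every pair keeps the scores exchangeable, although they share the
random `A` and are therefore not independent. For exchangeable scores, all `n + 1` events "score `j`
strictly exceeds fewer than `p` of the scores" are equally likely, and at least `p` of them always
occur, so each has probability at least `p / (n + 1) ≥ 1 - δ`. For the test score this event says
precisely that it is at most the `p`-th smallest calibration score.
-/

open MeasureTheory ProbabilityTheory

/-- The `k`-th smallest value (k-th order statistic, 1-indexed) of a finite tuple of reals:
the `k`-th entry of the tuple sorted in non-decreasing order. -/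
noncomputable def kthSmallest {m : ℕ} (r : Fin m → ℝ) (k : ℕ) : ℝ :=
  ((List.ofFn r).mergeSort (· ≤ ·)).getD (k - 1) 0

section StrictRank

open Finset

variable {ι κ α : Type*} [Fintype ι] [Fintype κ] [LinearOrder α]

/-- The rank of the `j`-th entry of a finite family: the number of entries strictly below it.
Ranks start at `0` and tied entries share the smallest of their ranks. Comparing a new value with
an order statistic amounts to bounding its rank, and ranks behave well under permutations. -/
def strictRank (f : ι → α) (j : ι) : ℕ :=
  #{i | f i < f j}

lemma strictRank_comp_equiv (e : ι ≃ κ) (f : κ → α) (j : ι) :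
    strictRank (fun i => f (e i)) j = strictRank f (e j) :=
  card_equiv e (by simp)

lemma strictRank_last {n : ℕ} (f : Fin (n + 1) → α) :
    strictRank f (Fin.last n) = #{i : Fin n | f i.castSucc < f (Fin.last n)} := by
  simp only [strictRank, card_filter, Fin.sum_univ_castSucc, lt_irrefl, if_false, add_zero]

lemma le_card_strictRank_lt (f : ι → α) {k : ℕ} (hk : k ≤ Fintype.card ι) :
    k ≤ #{j | strictRank f j < k} := by
  by_contra! hlt
  -- A minimal entry among those of rank at least `k` has only entries of rank below `k` under it.
  have hne : ({j | k ≤ strictRank f j} : Finset ι).Nonempty := by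
    by_contra! hempty
    have hall : ∀ j, strictRank f j < k := by simpa [filter_eq_empty_iff] using hempty
    exact hlt.not_ge (by simpa [hall] using hk)
  obtain ⟨j, hj, hmin⟩ := exists_min_image _ f hne
  have hsub : ({i | f i < f j} : Finset ι) ⊆ ({i | strictRank f i < k} : Finset ι) := by
    intro i hi
    simp only [mem_filter_univ] at hi hmin ⊢
    exact not_le.1 fun hki => (hmin i hki).not_gt hi
  exact (((mem_filter_univ j).1 hj).trans (card_le_card hsub)).not_gt hlt

lemma measurable_strictRank [TopologicalSpace α] [OrderClosedTopology α]
    [SecondCountableTopology α] [MeasurableSpace α] [OpensMeasurableSpace α] (j : ι) :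
    Measurable fun f : ι → α => strictRank f j := by
  simp only [strictRank, card_filter]
  exact measurable_sum _ fun i _ => Measurable.ite
    (measurableSet_lt (measurable_pi_apply i) (measurable_pi_apply j))
    measurable_const measurable_const

end StrictRank

section KthSmallest

open Finset

lemma mergeSort_ofFn_eq_ofFn_sort {α : Type*} [LinearOrder α] {m : ℕ} (r : Fin m → α) :
    (List.ofFn r).mergeSort (· ≤ ·) = List.ofFn (r ∘ Tuple.sort r) :=
  ((List.mergeSort_perm _ _).trans
    (Equiv.Perm.ofFn_comp_perm (Tuple.sort r) r).symm).eq_of_pairwise' (r := (· ≤ ·))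
      (List.pairwise_mergeSort' _ _) (Tuple.monotone_sort r).sortedLE_ofFn.pairwise

variable {m : ℕ} (r : Fin m → ℝ)

lemma kthSmallest_succ (i : Fin m) : kthSmallest r (i + 1) = r (Tuple.sort r i) := by
  simp [kthSmallest, mergeSort_ofFn_eq_ofFn_sort]

lemma le_kthSmallest_iff {k : ℕ} (hk : 1 ≤ k) (hkm : k ≤ m) {x : ℝ} :
    x ≤ kthSmallest r k ↔ #{i | r i < x} < k := by
  obtain ⟨j, rfl⟩ := Nat.exists_eq_add_of_le' hk
  have hcard : #{i | (r ∘ Tuple.sort r) i < x} = #{i | r i < x} :=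
    card_equiv (Tuple.sort r) (by simp)
  rw [kthSmallest_succ r ⟨j, hkm⟩, ← not_lt, ← hcard, Nat.lt_succ_iff, ← not_lt]
  exact (Tuple.lt_card_lt_iff_apply_lt_of_monotone (j := ⟨j, hkm⟩)
    (Tuple.monotone_sort r)).not.symm

end KthSmallest

lemma natCast_mul_measure_univ_le_sum_measure {Ω ι : Type*} [MeasurableSpace Ω] [Fintype ι]
    {μ : Measure Ω} {s : ι → Set Ω} [∀ i, DecidablePred (· ∈ s i)]
    (hs : ∀ i, NullMeasurableSet (s i) μ) {k : ℕ}
    (hk : ∀ ω, k ≤ Finset.card {i | ω ∈ s i}) :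
    k * μ Set.univ ≤ ∑ i, μ (s i) :=
  calc
    k * μ Set.univ = ∫⁻ _, k ∂μ := (lintegral_const _).symm
    _ ≤ ∫⁻ ω, ∑ i, (s i).indicator 1 ω ∂μ := lintegral_mono fun ω => by
      simpa [Set.indicator_apply] using Nat.cast_le (α := ENNReal).2 (hk ω)
    _ = ∑ i, ∫⁻ ω, (s i).indicator 1 ω ∂μ :=
      lintegral_finsetSum' _ fun i _ => aemeasurable_one.indicator₀ (hs i)
    _ = ∑ i, μ (s i) := Finset.sum_congr rfl fun i _ => lintegral_indicator_one₀ (hs i)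

section Exchangeable

variable {Ω ι E F : Type*} [MeasurableSpace Ω] [MeasurableSpace E] [MeasurableSpace F]
  {P : Measure Ω}

/-- Exchangeability of a family of random variables: permuting the indices does not change the
joint law. It replaces independence in the conformal argument, where scores share random
constants. Almost-everywhere measurability is part of `IdentDistrib`. -/
def Exchangeable (Y : ι → Ω → E) (P : Measure Ω) : Prop :=
  ∀ σ : Equiv.Perm ι, IdentDistrib (fun ω i => Y (σ i) ω) (fun ω i => Y i ω) P P

lemma exchangeable_of_iIndepFun [Countable ι] {X : ι → Ω → E} (hindep : iIndepFun X P)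
    (hident : ∀ i j, IdentDistrib (X i) (X j) P P) : Exchangeable X P :=
  fun σ => IdentDistrib.pi (fun i => hident (σ i) i) (hindep.precomp σ.injective) hindep

namespace Exchangeable

lemma aemeasurable {Y : ι → Ω → E} (hY : Exchangeable Y P) :
    AEMeasurable (fun ω i => Y i ω) P :=
  (hY 1).aemeasurable_snd

lemma comp {Y : ι → Ω → E} (hY : Exchangeable Y P) {g : E → F} (hg : Measurable g) :
    Exchangeable (fun i ω => g (Y i ω)) P :=
  fun σ => (hY σ).comp (u := fun y i => g (y i)) (by fun_prop)

lemma prodMk_of_indepFun [IsFiniteMeasure P] {X : ι → Ω → E} (hX : Exchangeable X P)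
    {A : Ω → F} (hA : AEMeasurable A P) (hindep : IndepFun A (fun ω i => X i ω) P) :
    Exchangeable (fun i ω => (A ω, X i ω)) P := by
  intro σ
  have hindep_perm : IndepFun A (fun ω i => X (σ i) ω) P :=
    hindep.comp (φ := id) (ψ := fun (x : ι → E) i => x (σ i)) measurable_id (by fun_prop)
  exact ((IdentDistrib.refl hA).prodMk (hX σ) hindep_perm hindep).comp
    (u := fun y i => (y.1, y.2 i)) (by fun_prop)

section Rank

variable {α : Type*} [LinearOrder α] [TopologicalSpace α] [OrderClosedTopology α]
  [SecondCountableTopology α] [MeasurableSpace α] [OpensMeasurableSpace α]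
  [Fintype ι] {Y : ι → Ω → α}

lemma measure_strictRank_lt_eq (hY : Exchangeable Y P) (k : ℕ) (i j : ι) :
    P {ω | strictRank (fun l => Y l ω) i < k} = P {ω | strictRank (fun l => Y l ω) j < k} := by
  classical
  have hrank (ω : Ω) : strictRank (fun l => Y (Equiv.swap i j l) ω) j =
      strictRank (fun l => Y l ω) i := by
    rw [strictRank_comp_equiv (Equiv.swap i j) (fun l => Y l ω), Equiv.swap_apply_right]
  simpa only [Set.preimage_ofPred_eq, hrank] using (hY (Equiv.swap i j)).measure_mem_eq
    (measurableSet_lt (measurable_strictRank j) (measurable_const (a := k)))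

lemma div_card_le_measure_strictRank_lt [IsProbabilityMeasure P] (hY : Exchangeable Y P) {k : ℕ}
    (hk : k ≤ Fintype.card ι) (j : ι) :
    (k / Fintype.card ι : ENNReal) ≤ P {ω | strictRank (fun l => Y l ω) j < k} := by
  have hmeas (i : ι) : NullMeasurableSet {ω | strictRank (fun l => Y l ω) i < k} P :=
    hY.aemeasurable.nullMeasurable
      (measurableSet_lt (measurable_strictRank i) (measurable_const (a := k)))
  have hsum := natCast_mul_measure_univ_le_sum_measure hmeas
    fun ω => le_card_strictRank_lt (fun l => Y l ω) hk
  simp only [hY.measure_strictRank_lt_eq k _ j, measure_univ, mul_one, Finset.sum_const,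
    Finset.card_univ, nsmul_eq_mul] at hsum
  exact ENNReal.div_le_of_le_mul' hsum

end Rank

theorem div_le_measure_le_kthSmallest [IsProbabilityMeasure P] {n : ℕ}
    {S : Fin (n + 1) → Ω → ℝ} (hS : Exchangeable S P) {k : ℕ} (hk : k ≤ n) :
    (k / (n + 1) : ENNReal) ≤
      P {ω | S (Fin.last n) ω ≤ kthSmallest (fun i : Fin n => S i.castSucc ω) k} := by
  obtain rfl | hk_pos := k.eq_zero_or_pos
  · simp
  · simpa [strictRank_last, le_kthSmallest_iff _ hk_pos hk] using
      hS.div_card_le_measure_strictRank_lt (k := k) (by simpa using Nat.le_succ_of_le hk)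
        (Fin.last n)

end Exchangeable

end Exchangeable

section MaxScore

variable {ι : Type*} [Fintype ι] [Nonempty ι]

/-- The max-normalized score `max_h a_h x_h` of a vector `x` under normalization constants `a`,
whose sublevel sets are the boxes in which coverage is claimed. -/
noncomputable def maxScore (a x : ι → ℝ) : ℝ :=
  Finset.univ.sup' Finset.univ_nonempty fun h => a h * x h

lemma measurable_maxScore :
    Measurable fun q : (ι → ℝ) × (ι → ℝ) => maxScore q.1 q.2 := by
  simp only [maxScore]
  fun_prop

lemma maxScore_le_iff {a : ι → ℝ} (ha : ∀ h, 0 < a h) {x : ι → ℝ} {q : ℝ} :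
    maxScore a x ≤ q ↔ ∀ h, x h ≤ q / a h := by
  simp [maxScore, le_div_iff₀' (ha _)]

end MaxScore

theorem conformal_random_normalization_general {Ω ι : Type*} [MeasurableSpace Ω]
    {P : Measure Ω} [IsProbabilityMeasure P] [Fintype ι] [Nonempty ι] {n : ℕ}
    {X : Fin (n + 1) → Ω → ι → ℝ} {A : Ω → ι → ℝ} (hA : ∀ ω h, 0 < A ω h)
    (hexch : Exchangeable (fun i ω => (A ω, X i ω)) P)
    {δ : ℝ} {p : ℕ} (hp : ((n : ℝ) + 1) * (1 - δ) ≤ p) (hpn : p ≤ n) :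
    ENNReal.ofReal (1 - δ) ≤ P {ω | ∀ h, X (Fin.last n) ω h ≤
      kthSmallest (fun i : Fin n => maxScore (A ω) (X i.castSucc ω)) p / A ω h} := by
  have hlevel : ENNReal.ofReal (1 - δ) ≤ p / (n + 1) := by
    apply ENNReal.ofReal_le_of_le_toReal
    rw [ENNReal.toReal_div, ENNReal.toReal_natCast, ← Nat.cast_succ, ENNReal.toReal_natCast,
      Nat.cast_succ]
    exact (le_div_iff₀' (by positivity)).2 hp
  simp only [← maxScore_le_iff (hA _)]
  exact hlevel.trans ((hexch.comp measurable_maxScore).div_le_measure_le_kthSmallest hpn)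

/-- Data-splitting step of Algorithm 1: the conformal coverage guarantee with
max-normalized scores is preserved when the normalization constants form a random vector
`A` with strictly positive entries that is independent of the i.i.d. family
`X 0, …, X n` of `ℝ^{H+1}`-valued random vectors. With `δ ∈ (0,1)`,
`p := ⌈(n+1)(1-δ)⌉ ≤ n`, random scores `S i := max_h A h * X i h`, and `Q` the `p`-th
smallest of the first `n` scores, the test vector satisfies `X_h ≤ Q / A h` for all `h`
with probability at least `1 - δ`. -/
theorem conformal_random_normalization {Ω : Type*} [MeasurableSpace Ω] (P : Measure Ω)
    [IsProbabilityMeasure P]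
    (H n : ℕ) (X : Fin (n + 1) → Ω → (Fin (H + 1) → ℝ))
    (hmeas : ∀ i, Measurable (X i))
    (hindep : iIndepFun X P)
    (hident : ∀ i j, IdentDistrib (X i) (X j) P P)
    (A : Ω → (Fin (H + 1) → ℝ)) (hAmeas : Measurable A)
    (hApos : ∀ ω h, 0 < A ω h)
    (hAindep : IndepFun A (fun ω => fun i : Fin (n + 1) => X i ω) P)
    (δ : ℝ) (hδ : δ ∈ Set.Ioo (0 : ℝ) 1)
    (p : ℕ) (hp : p = ⌈((n : ℝ) + 1) * (1 - δ)⌉₊) (hpn : p ≤ n)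
    (S : Fin (n + 1) → Ω → ℝ)
    (hS : ∀ i ω, S i ω = Finset.univ.sup' Finset.univ_nonempty (fun h => A ω h * X i ω h))
    (Q : Ω → ℝ)
    (hQ : ∀ ω, Q ω = kthSmallest (fun i : Fin n => S i.castSucc ω) p) :
    P {ω | ∀ h, X (Fin.last n) ω h ≤ Q ω / A ω h} ≥ ENNReal.ofReal (1 - δ) := by
  simpa only [ge_iff_le, hQ, hS, maxScore] using conformal_random_normalization_general hApos
    ((exchangeable_of_iIndepFun hindep hident).prodMk_of_indepFun hAmeas.aemeasurable hAindep)
    (hp ▸ Nat.le_ceil _) hpn
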